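/- arXiv:2009.11989 — 7 statements merged into one kernel-verified Lean document; each statement's English description precedes it below -/
import Mathlib

section
/- Let Z ∈ A_{n,q} be an assignment matrix with column sums n_1, …, n_q and let A = ZZᵀ be the adjacency matrix of the corresponding ideal graph, with modularity matrix M = A − (A 1_n 1_nᵀ A)/(1_nᵀ A 1_n) and modularity cost f(X) = tr(XᵀMX). Then f(Z) = (Σ_{i=1}^q n_i²) − (Σ_{i=1}^q n_i⁴)/(Σ_{i=1}^q n_i²). -/
/-!
Let `d` be the vector of column sums of `Z`, so that `Zᵀ 1 = d` and `ZᵀZ = diag d`. For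
`A = ZZᵀ` the degree vector is `A 1 = Z d`, the total degree is `d ⬝ d = ∑ dⱼ²`, and
`tr(ZᵀAZ) = tr((diag d)²) = ∑ dⱼ²`. Since `ZᵀZ d` is the entrywise square of `d`, the rank-one
part of `M` contributes `∑ dⱼ⁴ / ∑ dⱼ²`. When the total degree is zero (`n = 0`), division by
zero gives the value `0` on both sides, so no case distinction is needed.
-/

open Matrix BigOperators

/-- `X` is an assignment matrix: a 0-1 matrix (with at least as many rows as columns)
whose rows each sum to one and whose columns are orthogonal, `XᵀX = diag(n₁,…,n_q)`
with `n_j` the number of ones in column `j`. -/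
def IsAssignment {n q : ℕ} (X : Matrix (Fin n) (Fin q) ℝ) : Prop :=
  q ≤ n ∧ (∀ i j, X i j = 0 ∨ X i j = 1) ∧
  X *ᵥ (fun _ => (1 : ℝ)) = (fun _ => (1 : ℝ)) ∧
  Xᵀ * X = Matrix.diagonal (fun j => ∑ i, X i j)

/-- The modularity matrix `M = A − (A 1ₙ 1ₙᵀ A)/(1ₙᵀ A 1ₙ)`. -/
noncomputable def modularityMatrix {n : ℕ} (A : Matrix (Fin n) (Fin n) ℝ) :
    Matrix (Fin n) (Fin n) ℝ :=
  A - ((fun _ => (1 : ℝ)) ⬝ᵥ (A *ᵥ fun _ => (1 : ℝ)))⁻¹ •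
    Matrix.vecMulVec (A *ᵥ fun _ => (1 : ℝ)) ((fun _ => (1 : ℝ)) ᵥ* A)

/-- For an ideal graph `A = ZZᵀ` built from an assignment matrix `Z` with column sums
`n₁,…,n_q`, the modularity cost at `Z` is
`f(Z) = Σᵢ nᵢ² − (Σᵢ nᵢ⁴)/(Σᵢ nᵢ²)`. -/
theorem modularity_value_at_ideal_assignment {n q : ℕ}
    (Z : Matrix (Fin n) (Fin q) ℝ) (hZ : IsAssignment Z)
    (A : Matrix (Fin n) (Fin n) ℝ) (hA : A = Z * Zᵀ)
    (M : Matrix (Fin n) (Fin n) ℝ) (hM : M = modularityMatrix A)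
    (nn : Fin q → ℝ) (hn : ∀ j, nn j = ∑ i, Z i j) :
    Matrix.trace (Zᵀ * M * Z) =
      (∑ j, (nn j) ^ 2) - (∑ j, (nn j) ^ 4) / (∑ j, (nn j) ^ 2) := by
  obtain ⟨-, -, -, hD⟩ := hZ
  obtain rfl : nn = fun j => ∑ i, Z i j := funext hn
  set d : Fin q → ℝ := fun j => ∑ i, Z i j with hd
  have hsum : Zᵀ *ᵥ (fun _ => (1 : ℝ)) = d := by
    ext j
    simp [hd, Matrix.mulVec, dotProduct]
  have hdeg : A *ᵥ (fun _ => (1 : ℝ)) = Z *ᵥ d := by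
    rw [hA, ← Matrix.mulVec_mulVec, hsum]
  have hdeg' : (fun _ => (1 : ℝ)) ᵥ* A = Z *ᵥ d := by
    rw [← hdeg, ← Matrix.mulVec_transpose, hA, Matrix.transpose_mul, Matrix.transpose_transpose]
  have hsq : Zᵀ *ᵥ (Z *ᵥ d) = fun j => d j ^ 2 := by
    rw [Matrix.mulVec_mulVec, hD]
    ext j
    rw [Matrix.mulVec_diagonal, sq]
  have htot : (fun _ => (1 : ℝ)) ⬝ᵥ (A *ᵥ fun _ => (1 : ℝ)) = ∑ j, d j ^ 2 := by
    rw [hdeg, Matrix.dotProduct_mulVec, ← Matrix.mulVec_transpose, hsum]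
    simp [dotProduct, sq]
  have hA2 : Matrix.trace (Zᵀ * A * Z) = ∑ j, d j ^ 2 := by
    rw [hA, ← Matrix.mul_assoc, Matrix.mul_assoc, hD, Matrix.diagonal_mul_diagonal,
      Matrix.trace_diagonal]
    simp [sq]
  have hrank : Matrix.trace (Zᵀ * Matrix.vecMulVec (Z *ᵥ d) (Z *ᵥ d) * Z) = ∑ j, d j ^ 4 := by
    rw [Matrix.mul_vecMulVec, Matrix.vecMulVec_mul, ← Matrix.mulVec_transpose, hsq,
      Matrix.trace_vecMulVec]
    exact Finset.sum_congr rfl fun j _ => by ring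
  rw [hM, modularityMatrix, htot, hdeg, hdeg', Matrix.mul_sub, Matrix.sub_mul, Matrix.trace_sub,
    hA2, Matrix.mul_smul, Matrix.smul_mul, Matrix.trace_smul, hrank, smul_eq_mul,
    div_eq_inv_mul]
end

section
/- Let Z ∈ A_{n,q} be an assignment matrix with column sums n_1, …, n_q, let A = ZZᵀ be the adjacency matrix of the corresponding ideal graph, and let M = A − (A 1_n 1_nᵀ A)/(1_nᵀ A 1_n) be its modularity matrix with f(X) = tr(XᵀMX). Then for every assignment matrix X ∈ A_{n,q}, f(X) ≤ f(Z). That is, the ideal graph assignment Z is a global maximum of the modularity function over A_{n,q}. -/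
/-!
Write `f(X) = ∑ i j, M i j * (X Xᵀ) i j`. For the ideal graph, `A i j` is the indicator of
`i` and `j` lying in the same block, and the degree `d i` is the size of the block of `i`.
If `i, j` lie in different blocks then `M i j = -d i * d j / S ≤ 0`, where `S = ∑ i, d i`; if they
lie in the same block then `M i j = 1 - (d i)² / S ≥ 0`, because the block of `i` alone
contributes `(d i)²` to `S`. Since the entries of `X Xᵀ` lie in `[0, 1]`, the sum is maximized
term by term when `X Xᵀ` is the indicator of a common block, that is, `X Xᵀ = A = Z Zᵀ`.
-/

open Matrix BigOperators

/-- Each row of an assignment matrix is the indicator of a single label `c i`. -/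
lemma IsAssignment.exists_label {n q : ℕ} {X : Matrix (Fin n) (Fin q) ℝ} (hX : IsAssignment X) :
    ∃ c : Fin n → Fin q, ∀ i k, X i k = if c i = k then 1 else 0 := by
  obtain ⟨-, h01, hrow, -⟩ := hX
  have hsum : ∀ i, ∑ k, X i k = 1 := fun i => by
    simpa [Matrix.mulVec, dotProduct] using congrFun hrow i
  have hnn : ∀ i k, 0 ≤ X i k := fun i k => by rcases h01 i k with h | h <;> simp [h]
  have hex : ∀ i, ∃ k, X i k = 1 := by
    intro i
    by_contra! h
    have h0 : ∑ k, X i k = 0 := Finset.sum_eq_zero fun k _ => (h01 i k).resolve_right (h k)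
    linarith [hsum i]
  choose c hc using hex
  refine ⟨c, fun i k => ?_⟩
  split_ifs with h
  · rw [← h, hc]
  · have h2 := Finset.add_le_sum (fun k _ => hnn i k) (Finset.mem_univ (c i))
      (Finset.mem_univ k) h
    have := hnn i k
    rw [hsum, hc] at h2
    linarith

/-- `X Xᵀ` is the indicator matrix of the equivalence relation of having the same label. -/
lemma IsAssignment.exists_mul_transpose {n q : ℕ} {X : Matrix (Fin n) (Fin q) ℝ}
    (hX : IsAssignment X) :
    ∃ c : Fin n → Fin q, ∀ i j, (X * Xᵀ) i j = if c i = c j then 1 else 0 := by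
  obtain ⟨c, hc⟩ := hX.exists_label
  refine ⟨c, fun i j => ?_⟩
  simp [Matrix.mul_apply, hc, eq_comm]

lemma trace_quadratic_eq_sum {n q : ℕ} (M : Matrix (Fin n) (Fin n) ℝ)
    (X : Matrix (Fin n) (Fin q) ℝ) :
    Matrix.trace (Xᵀ * M * X) = ∑ i, ∑ j, M i j * (X * Xᵀ) i j := by
  rw [Matrix.mul_assoc, Matrix.trace_mul_comm, Matrix.mul_assoc]
  simp only [Matrix.trace, Matrix.diag_apply, Matrix.mul_apply (M := M)]
  refine Finset.sum_congr rfl fun i _ => Finset.sum_congr rfl fun j _ => ?_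
  simp [Matrix.mul_apply, mul_comm]

/-- If `A = ZZᵀ` is an ideal adjacency matrix with `Z` an assignment matrix, then the
modularity cost `f(X) = tr(XᵀMX)` satisfies `f(X) ≤ f(Z)` for every assignment matrix `X`:
the ideal assignment is a global maximum of modularity over `A_{n,q}`. -/
theorem ideal_assignment_is_global_max {n q : ℕ}
    (Z : Matrix (Fin n) (Fin q) ℝ) (hZ : IsAssignment Z)
    (A : Matrix (Fin n) (Fin n) ℝ) (hA : A = Z * Zᵀ)
    (M : Matrix (Fin n) (Fin n) ℝ) (hM : M = modularityMatrix A)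
    (X : Matrix (Fin n) (Fin q) ℝ) (hX : IsAssignment X) :
    Matrix.trace (Xᵀ * M * X) ≤ Matrix.trace (Zᵀ * M * Z) := by
  subst hM
  rw [trace_quadratic_eq_sum, trace_quadratic_eq_sum, ← hA]
  obtain ⟨c, hc⟩ := hZ.exists_mul_transpose
  obtain ⟨e, he⟩ := hX.exists_mul_transpose
  rw [← hA] at hc
  set d : Fin n → ℝ := fun i => ∑ j, A i j with hd
  set S : ℝ := ∑ i, d i with hS
  have hA0 : ∀ i j, 0 ≤ A i j := fun i j => by rw [hc]; split_ifs <;> norm_num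
  have hd0 : ∀ i, 0 ≤ d i := fun i => Finset.sum_nonneg fun j _ => hA0 i j
  have hS0 : 0 ≤ S := Finset.sum_nonneg fun i _ => hd0 i
  have hdeq : ∀ i j, c i = c j → d i = d j := fun i j h => by simp only [hd, hc, h]
  have hM : ∀ i j, modularityMatrix A i j = A i j - S⁻¹ * (d i * d j) := by
    intro i j
    have hcol : ∑ k, A k j = d j :=
      Finset.sum_congr rfl fun k _ => by simp only [hc, eq_comm]
    simp [modularityMatrix, Matrix.vecMulVec_apply, Matrix.mulVec, Matrix.vecMul, dotProduct,
      hcol, hS, hd]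
  -- The block of `i` consists of `d i` vertices of degree `d i`.
  have hsq : ∀ i, d i * d i ≤ S := by
    intro i
    calc d i * d i = ∑ j, A i j * d i := by rw [← Finset.sum_mul]
      _ ≤ ∑ j, d j := Finset.sum_le_sum fun j _ => by
        by_cases h : c i = c j
        · simp [hc, h, hdeq i j h]
        · simpa [hc, h] using hd0 j
  refine Finset.sum_le_sum fun i _ => Finset.sum_le_sum fun j _ => ?_
  have hP0 : 0 ≤ (X * Xᵀ) i j := by rw [he]; split_ifs <;> norm_num
  have hP1 : (X * Xᵀ) i j ≤ 1 := by rw [he]; split_ifs <;> norm_num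
  rw [hM]
  by_cases h : c i = c j
  · have hAij : A i j = 1 := by simp [hc, h]
    -- If `S = 0` then `S⁻¹ = 0`, and the bound still holds.
    have hle : S⁻¹ * (d i * d j) ≤ 1 := by
      rw [← hdeq i j h, inv_mul_eq_div]
      exact div_le_one_of_le₀ (hsq i) hS0
    rw [hAij]
    exact mul_le_mul_of_nonneg_left hP1 (by linarith)
  · have hAij : A i j = 0 := by simp [hc, h]
    have hnn : 0 ≤ S⁻¹ * (d i * d j) :=
      mul_nonneg (inv_nonneg.2 hS0) (mul_nonneg (hd0 i) (hd0 j))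
    rw [hAij, mul_zero]
    exact mul_nonpos_of_nonpos_of_nonneg (by linarith) hP0
end

section
/- Let Z ∈ A_{n,q} be an assignment matrix, A = ZZᵀ, and M = A − (A 1_n 1_nᵀ A)/(1_nᵀ A 1_n) the modularity matrix. Then the column space of A equals the column space of Z, and this space is the orthogonal direct sum of the column space of M and the span of the all-ones vector 1_n: R(A) = R(Z) = R(M) ⊕⊥ R(1_n). -/
/-!
`R(ZZᵀ) ⊆ R(Z)` is clear and the ranks agree over `ℝ`, so `R(A) = R(Z)`; in particular
`1ₙ = Z 1_q = A y` for some `y`. With `s = 1ₙᵀ A 1ₙ = ‖Zᵀ 1ₙ‖²`, the modularity matrix acts by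
`M x = A x - s⁻¹ (1ₙᵀ A x) A 1ₙ`, so `R(M) ⊆ R(A)`, and `1ₙᵀ M x = 0` once `s ≠ 0`.
Evaluating at `y` gives `M y = 1ₙ - (n / s) A 1ₙ`, so `A 1ₙ`, and with it every
`A x = M x + c A 1ₙ`, lies in `R(M) + span {1ₙ}`. If `s = 0` then `Zᵀ 1ₙ = 0`, so
`n = 1ₙᵀ Z 1_q = 0` and everything is trivial.
-/

open Matrix BigOperators

lemma range_mul_transpose_self {n q : ℕ} (Z : Matrix (Fin n) (Fin q) ℝ) :
    LinearMap.range (Z * Zᵀ).mulVecLin = LinearMap.range Z.mulVecLin := by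
  apply Submodule.eq_of_le_of_finrank_eq
  · rw [Matrix.mulVecLin_mul]
    exact LinearMap.range_comp_le_range _ _
  · exact Matrix.rank_self_mul_transpose Z

lemma modularityMatrix_mulVec {n : ℕ} (A : Matrix (Fin n) (Fin n) ℝ) (x : Fin n → ℝ) :
    modularityMatrix A *ᵥ x = A *ᵥ x -
      (((fun _ => (1 : ℝ)) ⬝ᵥ (A *ᵥ fun _ => (1 : ℝ)))⁻¹ * ((fun _ => (1 : ℝ)) ⬝ᵥ (A *ᵥ x))) •
        (A *ᵥ fun _ => (1 : ℝ)) := by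
  rw [modularityMatrix, Matrix.sub_mulVec, Matrix.smul_mulVec, Matrix.vecMulVec_mulVec,
    Matrix.dotProduct_mulVec _ A x, mul_smul, op_smul_eq_smul]

/-- The total degree `1ₙᵀ ZZᵀ 1ₙ` vanishes only for the empty graph. -/
lemma total_degree_ne_zero {n q : ℕ} [NeZero n] (Z : Matrix (Fin n) (Fin q) ℝ)
    (hZ : Z *ᵥ (fun _ => (1 : ℝ)) = (fun _ => (1 : ℝ))) :
    (fun _ => (1 : ℝ)) ⬝ᵥ ((Z * Zᵀ) *ᵥ fun _ => (1 : ℝ)) ≠ 0 := by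
  intro h
  rw [← Matrix.mulVec_mulVec, Matrix.dotProduct_mulVec, ← Matrix.mulVec_transpose,
    dotProduct_self_eq_zero] at h
  have h1 : (fun _ : Fin n => (1 : ℝ)) ⬝ᵥ (Z *ᵥ fun _ => (1 : ℝ)) = 0 := by
    rw [Matrix.dotProduct_mulVec, ← Matrix.mulVec_transpose, h, zero_dotProduct]
  rw [hZ] at h1
  simp [dotProduct, NeZero.ne n] at h1

/-- For an ideal graph `A = ZZᵀ` with modularity matrix `M`, the column space of `A`
equals the column space of `Z`, and it is the orthogonal direct sum of the column space
of `M` and the span of the all-ones vector: `R(A) = R(Z) = R(M) ⊕⊥ R(1ₙ)`. -/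
theorem range_ideal_adjacency_decomposition {n q : ℕ}
    (Z : Matrix (Fin n) (Fin q) ℝ) (hZ : IsAssignment Z)
    (A : Matrix (Fin n) (Fin n) ℝ) (hA : A = Z * Zᵀ)
    (M : Matrix (Fin n) (Fin n) ℝ) (hM : M = modularityMatrix A) :
    LinearMap.range A.mulVecLin = LinearMap.range Z.mulVecLin ∧
    LinearMap.range A.mulVecLin =
      LinearMap.range M.mulVecLin ⊔ Submodule.span ℝ {(fun _ => (1 : ℝ) : Fin n → ℝ)} ∧
    (∀ u ∈ LinearMap.range M.mulVecLin,
      ∀ w ∈ Submodule.span ℝ {(fun _ => (1 : ℝ) : Fin n → ℝ)}, u ⬝ᵥ w = 0) := by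
  have hone := hZ.2.2.1
  have hAZ : LinearMap.range A.mulVecLin = LinearMap.range Z.mulVecLin :=
    hA ▸ range_mul_transpose_self Z
  refine ⟨hAZ, ?_⟩
  rcases Nat.eq_zero_or_pos n with rfl | hn
  · exact ⟨Subsingleton.elim _ _, fun u _ w _ => by simp [dotProduct]⟩
  have : NeZero n := ⟨hn.ne'⟩
  have hs := total_degree_ne_zero Z hone
  rw [← hA] at hs
  have hMx : ∀ x, M *ᵥ x = _ := fun x => hM ▸ modularityMatrix_mulVec A x
  have h1A : (fun _ => (1 : ℝ) : Fin n → ℝ) ∈ LinearMap.range A.mulVecLin := by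
    rw [hAZ]
    exact ⟨_, hone⟩
  set e : Fin n → ℝ := fun _ => 1 with he
  have hee : e ⬝ᵥ e ≠ 0 := by simp [he, dotProduct, hn.ne']
  constructor
  · apply le_antisymm
    · have hMmem : ∀ x, M *ᵥ x ∈ LinearMap.range M.mulVecLin ⊔ Submodule.span ℝ {e} :=
        fun x => Submodule.mem_sup_left ⟨x, rfl⟩
      have hAe : A *ᵥ e ∈ LinearMap.range M.mulVecLin ⊔ Submodule.span ℝ {e} := by
        obtain ⟨y, hy⟩ := h1A
        rw [Matrix.mulVecLin_apply] at hy
        have hMy := hMx y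
        rw [hy] at hMy
        have h2 : A *ᵥ e = ((e ⬝ᵥ (A *ᵥ e))⁻¹ * (e ⬝ᵥ e))⁻¹ • (e - M *ᵥ y) := by
          rw [hMy, sub_sub_cancel, smul_smul,
            inv_mul_cancel₀ (mul_ne_zero (inv_ne_zero hs) hee), one_smul]
        rw [h2]
        exact Submodule.smul_mem _ _ (Submodule.sub_mem _
          (Submodule.mem_sup_right (Submodule.mem_span_singleton_self e)) (hMmem y))
      rintro _ ⟨x, rfl⟩
      rw [Matrix.mulVecLin_apply, sub_eq_iff_eq_add.mp (hMx x).symm]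
      exact Submodule.add_mem _ (hMmem x) (Submodule.smul_mem _ _ hAe)
    · refine sup_le ?_ ((Submodule.span_singleton_le_iff_mem _ _).mpr h1A)
      rintro _ ⟨x, rfl⟩
      rw [Matrix.mulVecLin_apply, hMx x]
      exact Submodule.sub_mem _ ⟨x, rfl⟩ (Submodule.smul_mem _ _ ⟨e, rfl⟩)
  · rintro _ ⟨x, rfl⟩ w hw
    obtain ⟨c, rfl⟩ := Submodule.mem_span_singleton.mp hw
    rw [Matrix.mulVecLin_apply, dotProduct_smul, dotProduct_comm, hMx x, dotProduct_sub,
      dotProduct_smul, smul_eq_mul, smul_eq_mul, mul_right_comm, inv_mul_cancel₀ hs, one_mul,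
      sub_self, mul_zero]
end

section
/- Let X ∈ St(q, n) with Xᵀ1_n ≠ 0, set 1̃_n = 1_n/√n and q_* = Xᵀ1̃_n / ‖Xᵀ1̃_n‖_2, and define Y_* = 1̃_n q_*ᵀ + X(I_q − q_* q_*ᵀ). Then Y_* belongs to the feasible set F = {Y ∈ St(q, n) : 1_n ∈ R(Y)}; that is, Y_* has orthonormal columns and the all-ones vector 1_n lies in the column space of Y_*. -/
/-!
Write `P = I - q⋆q⋆ᵀ`. Since `q⋆` is a unit vector, `P` is a symmetric idempotent with `P q⋆ = 0`,
and `Xᵀ1̃` is a multiple of `q⋆`, so `P (Xᵀ1̃) = 0`. Hence the two summands `1̃ q⋆ᵀ` and `X P` of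
`Y⋆` satisfy `(X P)ᵀ (1̃ q⋆ᵀ) = 0`, and `Y⋆ᵀY⋆ = q⋆q⋆ᵀ + P = I`. Moreover `Y⋆ q⋆ = 1̃`, so that
`1 = Y⋆ (√n q⋆)`.
-/

open Matrix BigOperators

/-- For `X ∈ St(q,n)` with `Xᵀ1ₙ ≠ 0`, setting `1̃ₙ = 1ₙ/√n`,
`q⋆ = Xᵀ1̃ₙ/‖Xᵀ1̃ₙ‖₂` and `Y⋆ = 1̃ₙ q⋆ᵀ + X(I_q − q⋆q⋆ᵀ)`, the matrix `Y⋆` belongs to the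
feasible set `F = {Y ∈ St(q,n) : 1ₙ ∈ R(Y)}`. -/
theorem projection_lands_in_feasible_set {n q : ℕ}
    (X : Matrix (Fin n) (Fin q) ℝ) (hX : Xᵀ * X = 1)
    (hne : Xᵀ *ᵥ (fun _ => (1 : ℝ)) ≠ 0)
    (ot : Fin n → ℝ) (hot : ot = fun _ => 1 / Real.sqrt n)
    (v : Fin q → ℝ) (hv : v = Xᵀ *ᵥ ot)
    (qs : Fin q → ℝ) (hqs : qs = (Real.sqrt (v ⬝ᵥ v))⁻¹ • v)
    (Y : Matrix (Fin n) (Fin q) ℝ)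
    (hY : Y = Matrix.vecMulVec ot qs +
      X * ((1 : Matrix (Fin q) (Fin q) ℝ) - Matrix.vecMulVec qs qs)) :
    Yᵀ * Y = 1 ∧ (fun _ => (1 : ℝ) : Fin n → ℝ) ∈ LinearMap.range Y.mulVecLin := by
  have hn : 0 < n := by
    rcases Nat.eq_zero_or_pos n with rfl | h
    · exact absurd (by ext i; simp [Matrix.mulVec, dotProduct]) hne
    · exact h
  have hs : Real.sqrt n ≠ 0 := (Real.sqrt_pos.2 (by exact_mod_cast hn)).ne'
  have hss : Real.sqrt n * Real.sqrt n = n := Real.mul_self_sqrt (Nat.cast_nonneg n)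
  have hone : (fun _ => (1 : ℝ) : Fin n → ℝ) = Real.sqrt n • ot := by
    ext i
    simp [hot, hs]
  have hoto : ot ⬝ᵥ ot = 1 := by
    simp only [hot, dotProduct, Finset.sum_const, Finset.card_univ, Fintype.card_fin,
      nsmul_eq_mul]
    field_simp
    rw [sq, hss]
  have hv0 : v ≠ 0 := by
    intro h
    apply hne
    rw [hone, Matrix.mulVec_smul, ← hv, h, smul_zero]
  have hvv : 0 < v ⬝ᵥ v :=
    lt_of_le_of_ne (Finset.sum_nonneg fun i _ => mul_self_nonneg (v i))
      fun h => hv0 (dotProduct_self_eq_zero.1 h.symm)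
  have hr : Real.sqrt (v ⬝ᵥ v) ≠ 0 := (Real.sqrt_pos.2 hvv).ne'
  have hrr : Real.sqrt (v ⬝ᵥ v) * Real.sqrt (v ⬝ᵥ v) = v ⬝ᵥ v := Real.mul_self_sqrt hvv.le
  have hvq : v = Real.sqrt (v ⬝ᵥ v) • qs := by
    rw [hqs, smul_smul, mul_inv_cancel₀ hr, one_smul]
  have hqq : qs ⬝ᵥ qs = 1 := by
    rw [hqs, smul_dotProduct, dotProduct_smul, smul_eq_mul, smul_eq_mul]
    field_simp
    rw [sq, hrr]
  set P : Matrix (Fin q) (Fin q) ℝ := 1 - Matrix.vecMulVec qs qs with hP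
  have hPq : P *ᵥ qs = 0 := by
    ext i
    simp [hP, Matrix.sub_mulVec, Matrix.vecMulVec_mulVec, hqq]
  have hPt : Pᵀ = P := by
    simp [hP, Matrix.transpose_vecMulVec]
  have hPv : P *ᵥ v = 0 := by
    rw [hvq, Matrix.mulVec_smul, hPq, smul_zero]
  have hvP : v ᵥ* P = 0 := by
    rw [← hPt, Matrix.vecMul_transpose, hPv]
  have hPP : P * P = P := by
    conv_lhs => rw [hP]
    rw [Matrix.sub_mul, one_mul, Matrix.vecMulVec_mul]
    have : qs ᵥ* P = 0 := by rw [← hPt, Matrix.vecMul_transpose, hPq]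
    rw [this, Matrix.vecMulVec_zero, sub_zero]
  have hoX : ot ᵥ* X = v := by rw [hv, Matrix.mulVec_transpose]
  have hYt : Yᵀ = Matrix.vecMulVec qs ot + P * Xᵀ := by
    rw [hY, Matrix.transpose_add, Matrix.transpose_mul, hPt, Matrix.transpose_vecMulVec]
  have hYto : Yᵀ *ᵥ ot = qs := by
    rw [hYt, Matrix.add_mulVec, ← Matrix.mulVec_mulVec, ← hv, hPv, Matrix.vecMulVec_mulVec, hoto]
    simp
  have hYtX : Yᵀ * X * P = P := by
    rw [hYt, Matrix.add_mul, Matrix.vecMulVec_mul, hoX, Matrix.mul_assoc, hX, mul_one,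
      Matrix.add_mul, Matrix.vecMulVec_mul, hvP, Matrix.vecMulVec_zero, zero_add, hPP]
  have hYq : Y *ᵥ qs = ot := by
    rw [hY, Matrix.add_mulVec, ← Matrix.mulVec_mulVec, hPq, Matrix.vecMulVec_mulVec, hqq]
    simp
  constructor
  · calc Yᵀ * Y = Yᵀ * (Matrix.vecMulVec ot qs + X * P) := by rw [← hY]
      _ = Matrix.vecMulVec qs qs + P := by
        rw [Matrix.mul_add, Matrix.mul_vecMulVec, hYto, ← Matrix.mul_assoc, hYtX]
      _ = 1 := by rw [hP, add_sub_cancel]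
  · refine ⟨Real.sqrt n • qs, ?_⟩
    rw [Matrix.mulVecLin_apply, Matrix.mulVec_smul, hYq, hone]
end

section
/- Let X ∈ St(q, n) with Xᵀ1_n ≠ 0, set 1̃_n = 1_n/√n, q_* = Xᵀ1̃_n / ‖Xᵀ1̃_n‖_2, and Y_* = 1̃_n q_*ᵀ + X(I_q − q_* q_*ᵀ). Then Y_* is the unique maximizer of tr(XᵀY) over the feasible set F = {Y ∈ St(q, n) : 1_n ∈ R(Y)}; equivalently, Y_* is the unique minimizer of ‖X − Y‖_F² over Y ∈ F, i.e., Y_* is the projection of X onto F. -/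
/-!
Write `e = 1̃ₙ`, `v = Xᵀe`, `σ = ‖v‖`, `q⋆ = v/σ`.  A feasible `W` satisfies `W p = e` for a
unit vector `p`.  With the orthogonal projection `P = I − ppᵀ`, expanding a square gives
`‖(X − W)P‖_F² = 2 (q − 1 + ⟨v, p⟩ − tr(XᵀW))` (`trace_sq_sub_mul_proj`), while
`tr(XᵀY⋆) = q − 1 + σ`.  Hence
`2 (tr(XᵀY⋆) − tr(XᵀW)) = ‖(X − W)P‖_F² + 2 (σ − ⟨v, p⟩)`,
and both summands are nonnegative, the second by Cauchy–Schwarz.  If both vanish, then `p = q⋆`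
and `W P = X P`, so `W = e pᵀ + W P = Y⋆`.  The Frobenius statements follow from
`‖X − W‖_F² = 2q − 2 tr(XᵀW)` on the Stiefel manifold.
-/

open Matrix BigOperators

lemma sum_sq_eq_trace {n q : ℕ} (A : Matrix (Fin n) (Fin q) ℝ) :
    ∑ i, ∑ j, A i j ^ 2 = trace (Aᵀ * A) := by
  rw [Finset.sum_comm]
  simp [trace, Matrix.mul_apply, sq]

lemma sum_sq_sub_eq {n q : ℕ} {X W : Matrix (Fin n) (Fin q) ℝ} (hX : Xᵀ * X = 1)
    (hW : Wᵀ * W = 1) :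
    ∑ i, ∑ j, (X i j - W i j) ^ 2 = 2 * q - 2 * trace (Xᵀ * W) := by
  have h := sum_sq_eq_trace (X - W)
  have hs : trace (Wᵀ * X) = trace (Xᵀ * W) := by
    rw [← trace_transpose, transpose_mul, transpose_transpose]
  simp only [Matrix.sub_apply] at h
  rw [h, transpose_sub, Matrix.sub_mul, Matrix.mul_sub, Matrix.mul_sub, hX, hW]
  simp only [trace_sub, trace_one, Fintype.card_fin, hs]
  ring

lemma proj_mul_self {q : ℕ} {p : Fin q → ℝ} (hp : p ⬝ᵥ p = 1) :
    (1 - vecMulVec p p) * (1 - vecMulVec p p) = 1 - vecMulVec p p := by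
  have h : vecMulVec p p * vecMulVec p p = vecMulVec p p := by
    rw [vecMulVec_mul_vecMulVec, hp, one_smul]
  rw [Matrix.mul_sub, Matrix.sub_mul _ _ (vecMulVec p p), h]
  simp

lemma proj_transpose {q : ℕ} (p : Fin q → ℝ) :
    (1 - vecMulVec p p)ᵀ = 1 - vecMulVec p p := by
  rw [transpose_sub, transpose_one, transpose_vecMulVec]

/-- The left-hand side is `‖(X − W)P‖_F²` for the orthogonal projection `P = I − ppᵀ`. -/
lemma trace_sq_sub_mul_proj {n q : ℕ} {X W : Matrix (Fin n) (Fin q) ℝ} (hX : Xᵀ * X = 1)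
    (hW : Wᵀ * W = 1) {e : Fin n → ℝ} {p : Fin q → ℝ} (hp : p ⬝ᵥ p = 1) (hWp : W *ᵥ p = e) :
    ∑ i, ∑ j, ((X - W) * (1 - vecMulVec p p) : Matrix (Fin n) (Fin q) ℝ) i j ^ 2 =
      2 * (q - 1 + (Xᵀ *ᵥ e) ⬝ᵥ p - trace (Xᵀ * W)) := by
  rw [sum_sq_eq_trace, transpose_mul, proj_transpose, Matrix.mul_assoc, trace_mul_comm,
    Matrix.mul_assoc, Matrix.mul_assoc, proj_mul_self hp, ← Matrix.mul_assoc]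
  have hs : Wᵀ * X = (Xᵀ * W)ᵀ := by
    rw [transpose_mul, transpose_transpose]
  have hM : (X - W)ᵀ * (X - W) = 1 + 1 - (Xᵀ * W + (Xᵀ * W)ᵀ) := by
    rw [transpose_sub, Matrix.sub_mul, Matrix.mul_sub, Matrix.mul_sub, hX, hW, hs]
    abel
  have h1 : trace (Xᵀ * W * vecMulVec p p) = (Xᵀ *ᵥ e) ⬝ᵥ p := by
    rw [mul_vecMulVec, trace_vecMulVec, ← mulVec_mulVec, hWp]
  have h2 : trace ((Xᵀ * W)ᵀ * vecMulVec p p) = (Xᵀ *ᵥ e) ⬝ᵥ p := by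
    rw [← h1, ← trace_transpose, transpose_mul, transpose_transpose, transpose_vecMulVec,
      trace_mul_comm]
  rw [hM, Matrix.mul_sub, Matrix.mul_one, Matrix.sub_mul, Matrix.add_mul, Matrix.add_mul]
  simp only [trace_sub, trace_add, h1, h2, trace_transpose, Matrix.one_mul, trace_vecMulVec, hp,
    trace_one, Fintype.card_fin]
  ring

/-- For unit vectors `p` and `r`, the Cauchy–Schwarz defect is half the squared distance. -/
lemma dot_sub_sub_self {q : ℕ} {p r : Fin q → ℝ} (hp : p ⬝ᵥ p = 1) (hr : r ⬝ᵥ r = 1) :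
    (r - p) ⬝ᵥ (r - p) = 2 * (1 - r ⬝ᵥ p) := by
  rw [sub_dotProduct, dotProduct_sub, dotProduct_sub, hp, hr, dotProduct_comm p r]
  ring

/-- For `X ∈ St(q,n)` with `Xᵀ1ₙ ≠ 0`, the matrix
`Y⋆ = 1̃ₙ q⋆ᵀ + X(I_q − q⋆q⋆ᵀ)` with `1̃ₙ = 1ₙ/√n`, `q⋆ = Xᵀ1̃ₙ/‖Xᵀ1̃ₙ‖₂` is the unique
maximizer of `tr(XᵀY)` over the feasible set `F = {Y ∈ St(q,n) : 1ₙ ∈ R(Y)}`;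
equivalently, the unique minimizer of `‖X − Y‖_F²` over `F`, i.e. the projection of `X`
onto `F`. -/
theorem projection_is_unique_optimum {n q : ℕ}
    (X : Matrix (Fin n) (Fin q) ℝ) (hX : Xᵀ * X = 1)
    (hne : Xᵀ *ᵥ (fun _ => (1 : ℝ)) ≠ 0)
    (ot : Fin n → ℝ) (hot : ot = fun _ => 1 / Real.sqrt n)
    (v : Fin q → ℝ) (hv : v = Xᵀ *ᵥ ot)
    (qs : Fin q → ℝ) (hqs : qs = (Real.sqrt (v ⬝ᵥ v))⁻¹ • v)
    (Y : Matrix (Fin n) (Fin q) ℝ)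
    (hY : Y = Matrix.vecMulVec ot qs +
      X * ((1 : Matrix (Fin q) (Fin q) ℝ) - Matrix.vecMulVec qs qs)) :
    (Yᵀ * Y = 1 ∧ (fun _ => (1 : ℝ) : Fin n → ℝ) ∈ LinearMap.range Y.mulVecLin) ∧
    (∀ W : Matrix (Fin n) (Fin q) ℝ, Wᵀ * W = 1 →
      (fun _ => (1 : ℝ) : Fin n → ℝ) ∈ LinearMap.range W.mulVecLin →
      Matrix.trace (Xᵀ * W) ≤ Matrix.trace (Xᵀ * Y)) ∧
    (∀ W : Matrix (Fin n) (Fin q) ℝ, Wᵀ * W = 1 →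
      (fun _ => (1 : ℝ) : Fin n → ℝ) ∈ LinearMap.range W.mulVecLin →
      Matrix.trace (Xᵀ * W) = Matrix.trace (Xᵀ * Y) → W = Y) ∧
    (∀ W : Matrix (Fin n) (Fin q) ℝ, Wᵀ * W = 1 →
      (fun _ => (1 : ℝ) : Fin n → ℝ) ∈ LinearMap.range W.mulVecLin →
      (∑ i, ∑ j, (X i j - Y i j) ^ 2) ≤ ∑ i, ∑ j, (X i j - W i j) ^ 2) ∧
    (∀ W : Matrix (Fin n) (Fin q) ℝ, Wᵀ * W = 1 →
      (fun _ => (1 : ℝ) : Fin n → ℝ) ∈ LinearMap.range W.mulVecLin →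
      (∑ i, ∑ j, (X i j - W i j) ^ 2) = (∑ i, ∑ j, (X i j - Y i j) ^ 2) → W = Y) := by
  have hn : 0 < n := by
    rcases Nat.eq_zero_or_pos n with h | h
    · subst h
      exact absurd (by ext i; simp [mulVec, dotProduct]) hne
    · exact h
  have hsn : 0 < Real.sqrt n := Real.sqrt_pos.2 (by exact_mod_cast hn)
  have hones : (fun _ => (1 : ℝ) : Fin n → ℝ) = Real.sqrt n • ot := by
    subst hot
    ext i
    simp [hsn.ne']
  have hoo : ot ⬝ᵥ ot = 1 := by
    subst hot
    have h := Real.mul_self_sqrt (Nat.cast_nonneg (α := ℝ) n)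
    simp only [dotProduct, Finset.sum_const, Finset.card_univ, Fintype.card_fin, nsmul_eq_mul]
    field_simp
    rw [sq, h]
  have hv0 : v ≠ 0 := by
    intro h
    apply hne
    rw [hones, mulVec_smul, ← hv, h, smul_zero]
  have hvv : 0 < v ⬝ᵥ v :=
    lt_of_le_of_ne (Finset.sum_nonneg fun i _ => mul_self_nonneg (v i))
      fun h => hv0 (dotProduct_self_eq_zero.1 h.symm)
  obtain ⟨σ, hσ⟩ : ∃ σ, σ = Real.sqrt (v ⬝ᵥ v) := ⟨_, rfl⟩
  have hσ0 : 0 < σ := hσ ▸ Real.sqrt_pos.2 hvv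
  have hσσ : σ * σ = v ⬝ᵥ v := hσ ▸ Real.mul_self_sqrt hvv.le
  rw [← hσ] at hqs
  have hvq : v = σ • qs := by
    rw [hqs, smul_smul, mul_inv_cancel₀ hσ0.ne', one_smul]
  have hqq : qs ⬝ᵥ qs = 1 := by
    rw [hqs, smul_dotProduct, dotProduct_smul, ← hσσ]
    simp only [smul_eq_mul]
    field_simp
  have hPq : (1 - vecMulVec qs qs) *ᵥ qs = 0 := by
    rw [sub_mulVec, one_mulVec, vecMulVec_mulVec, hqq]
    simp
  have hYq : Y *ᵥ qs = ot := by
    rw [hY, add_mulVec, ← mulVec_mulVec, hPq, vecMulVec_mulVec, hqq]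
    simp
  have hYY : Yᵀ * Y = 1 := by
    -- The cross terms vanish because `P Xᵀ e = P v = σ P q⋆ = 0`.
    have hc : (X * (1 - vecMulVec qs qs))ᵀ * vecMulVec ot qs = 0 := by
      rw [transpose_mul, proj_transpose, mul_vecMulVec, ← mulVec_mulVec, ← hv, hvq, mulVec_smul,
        hPq]
      simp
    have hc' : (vecMulVec ot qs)ᵀ * (X * (1 - vecMulVec qs qs)) = 0 := by
      rw [← transpose_transpose (_ * _), transpose_mul, transpose_transpose, hc, transpose_zero]
    rw [hY, transpose_add, Matrix.add_mul, Matrix.mul_add, Matrix.mul_add, hc, hc',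
      transpose_vecMulVec, vecMulVec_mul_vecMulVec, hoo, transpose_mul, proj_transpose,
      Matrix.mul_assoc, ← Matrix.mul_assoc Xᵀ, hX, Matrix.one_mul, proj_mul_self hqq]
    simp
  have hYtr : trace (Xᵀ * Y) = q - 1 + σ := by
    rw [hY, Matrix.mul_add, mul_vecMulVec, ← hv, ← Matrix.mul_assoc, hX, Matrix.one_mul,
      trace_add, trace_sub, trace_vecMulVec, trace_vecMulVec, hqq, trace_one, Fintype.card_fin,
      hvq, smul_dotProduct, hqq, smul_eq_mul]
    ring
  -- The optimality gap of a feasible `W` as a sum of two nonnegative terms.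
  have key : ∀ W : Matrix (Fin n) (Fin q) ℝ, Wᵀ * W = 1 →
      (fun _ => (1 : ℝ) : Fin n → ℝ) ∈ LinearMap.range W.mulVecLin →
      ∃ p : Fin q → ℝ, W *ᵥ p = ot ∧
        2 * (trace (Xᵀ * Y) - trace (Xᵀ * W)) =
          ∑ i, ∑ j, ((X - W) * (1 - vecMulVec p p) : Matrix (Fin n) (Fin q) ℝ) i j ^ 2 +
            σ * ((qs - p) ⬝ᵥ (qs - p)) := by
    rintro W hW ⟨u, hu⟩
    rw [mulVecLin_apply] at hu
    have hWp : W *ᵥ ((Real.sqrt n)⁻¹ • u) = ot := by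
      rw [mulVec_smul, hu, hones, smul_smul, inv_mul_cancel₀ hsn.ne', one_smul]
    generalize (Real.sqrt n)⁻¹ • u = p at hWp
    have hp : p ⬝ᵥ p = 1 := by
      rw [← hoo, ← hWp, dotProduct_mulVec, vecMul_mulVec, hW, vecMul_one]
    refine ⟨p, hWp, ?_⟩
    rw [trace_sq_sub_mul_proj hX hW hp hWp, dot_sub_sub_self hp hqq, hYtr, ← hv, hvq,
      smul_dotProduct, smul_eq_mul]
    ring
  have hdot : ∀ w : Fin q → ℝ, 0 ≤ w ⬝ᵥ w := fun w =>
    Finset.sum_nonneg fun i _ => mul_self_nonneg (w i)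
  have hfro : ∀ A : Matrix (Fin n) (Fin q) ℝ, 0 ≤ ∑ i, ∑ j, A i j ^ 2 := fun A =>
    Finset.sum_nonneg fun i _ => Finset.sum_nonneg fun j _ => sq_nonneg _
  have hmax : ∀ W : Matrix (Fin n) (Fin q) ℝ, Wᵀ * W = 1 →
      (fun _ => (1 : ℝ) : Fin n → ℝ) ∈ LinearMap.range W.mulVecLin →
      trace (Xᵀ * W) ≤ trace (Xᵀ * Y) := by
    intro W hW hr
    obtain ⟨p, -, h⟩ := key W hW hr
    have h1 := hfro ((X - W) * (1 - vecMulVec p p))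
    have h2 := mul_nonneg hσ0.le (hdot (qs - p))
    linarith
  have huniq : ∀ W : Matrix (Fin n) (Fin q) ℝ, Wᵀ * W = 1 →
      (fun _ => (1 : ℝ) : Fin n → ℝ) ∈ LinearMap.range W.mulVecLin →
      trace (Xᵀ * W) = trace (Xᵀ * Y) → W = Y := by
    intro W hW hr heq
    obtain ⟨p, hWp, h⟩ := key W hW hr
    have h1 := hfro ((X - W) * (1 - vecMulVec p p))
    have h2 := mul_nonneg hσ0.le (hdot (qs - p))
    have h3 : σ * ((qs - p) ⬝ᵥ (qs - p)) = 0 := by linarith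
    have h4 : ∑ i, ∑ j, ((X - W) * (1 - vecMulVec p p) : Matrix (Fin n) (Fin q) ℝ) i j ^ 2 = 0 := by
      linarith
    have hpq : qs = p :=
      sub_eq_zero.1 (dotProduct_self_eq_zero.1 ((mul_eq_zero.1 h3).resolve_left hσ0.ne'))
    subst hpq
    have h5 : (X - W) * (1 - vecMulVec qs qs) = 0 := by
      ext i j
      have h6 := (Finset.sum_eq_zero_iff_of_nonneg fun i _ =>
        Finset.sum_nonneg fun j _ => sq_nonneg _).1 h4 i (Finset.mem_univ i)
      have h7 := (Finset.sum_eq_zero_iff_of_nonneg fun j _ => sq_nonneg _).1 h6 j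
        (Finset.mem_univ j)
      exact pow_eq_zero_iff two_ne_zero |>.1 h7
    rw [Matrix.sub_mul, sub_eq_zero] at h5
    rw [hY, h5, Matrix.mul_sub, mul_vecMulVec, hWp, Matrix.mul_one]
    abel
  refine ⟨⟨hYY, Real.sqrt n • qs, ?_⟩, hmax, huniq, ?_, ?_⟩
  · rw [mulVecLin_apply, mulVec_smul, hYq, hones]
  · intro W hW hr
    rw [sum_sq_sub_eq hX hW, sum_sq_sub_eq hX hYY]
    linarith [hmax W hW hr]
  · intro W hW hr h
    rw [sum_sq_sub_eq hX hW, sum_sq_sub_eq hX hYY] at h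
    exact huniq W hW hr (by linarith)
end

section
/- Let X ∈ ℝ^{n×q} be a rank-q matrix whose column space B contains an assignment-matrix basis, i.e., there exists Z ∈ A_{n,q} with R(Z) = B. Then B has exactly q! bases that are assignment matrices, namely the matrices Z P_q as P_q ranges over the q×q permutation matrices. -/
/-!
An assignment matrix is the incidence matrix of a labelling `c : Fin n → Fin q`, and acts on vectors
by `v ↦ v ∘ c`; its columns are independent exactly when `c` is surjective. If the incidence matrix
of `d` has its columns in the range of the incidence matrix of `c`, then each indicator `1_{d = j}`
is constant on the fibres of `c`, so `d` factors as `σ ∘ c`. When both labellings are surjective,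
`σ` is a surjective self-map of `Fin q`, hence a permutation. The assignment bases of the column
space are therefore the incidence matrices of `σ ∘ c`, one for each permutation `σ`; these are the
products of `Z` with permutation matrices, and they are distinct because `c` is surjective.
-/

open Matrix BigOperators

/-- `P` is a permutation matrix: a square 0-1 matrix with exactly one `1` in each row
and each column. -/
def IsPermMatrix {q : ℕ} (P : Matrix (Fin q) (Fin q) ℝ) : Prop :=
  (∀ i j, P i j = 0 ∨ P i j = 1) ∧ (∀ i, ∃! j, P i j = 1) ∧ (∀ j, ∃! i, P i j = 1)

/-- The 0-1 incidence matrix of the map `c`, whose row `i` is the basis vector `e_{c i}`. -/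
def incidence {m q : ℕ} (c : Fin m → Fin q) : Matrix (Fin m) (Fin q) ℝ :=
  Matrix.of fun i j => if c i = j then 1 else 0

lemma incidence_apply {m q : ℕ} (c : Fin m → Fin q) (i : Fin m) (j : Fin q) :
    incidence c i j = if c i = j then 1 else 0 := rfl

lemma incidence_injective {m q : ℕ} :
    Function.Injective (incidence : (Fin m → Fin q) → Matrix (Fin m) (Fin q) ℝ) := by
  intro c d h
  funext i
  have h1 := congrFun (congrFun h i) (c i)
  simp only [incidence_apply, if_true] at h1
  by_contra hne
  rw [if_neg (fun h => hne h.symm)] at h1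
  exact one_ne_zero h1

lemma incidence_mulVec {m q : ℕ} (c : Fin m → Fin q) (v : Fin q → ℝ) :
    incidence c *ᵥ v = v ∘ c := by
  funext i
  simp [Matrix.mulVec, dotProduct, incidence_apply]

lemma incidence_mul {n m q : ℕ} (c : Fin n → Fin m) (σ : Fin m → Fin q) :
    incidence c * incidence σ = incidence (σ ∘ c) := by
  ext i j
  rw [Matrix.mul_apply, Finset.sum_eq_single (c i)]
  · simp [incidence_apply]
  · intro k _ hk
    rw [incidence_apply, if_neg (Ne.symm hk), zero_mul]
  · simp

lemma isAssignment_iff {n q : ℕ} (X : Matrix (Fin n) (Fin q) ℝ) :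
    IsAssignment X ↔ q ≤ n ∧ ∃ c, X = incidence c := by
  constructor
  · rintro ⟨hqn, h01, hsum, -⟩
    refine ⟨hqn, ?_⟩
    have hrow : ∀ i, ∑ j, X i j = 1 := fun i => by
      simpa [Matrix.mulVec, dotProduct] using congrFun hsum i
    have hex : ∀ i, ∃ j, X i j = 1 := by
      intro i
      by_contra! hne
      have h0 : ∑ j, X i j = 0 :=
        Finset.sum_eq_zero fun j _ => (h01 i j).resolve_right (hne j)
      rw [hrow i] at h0
      exact one_ne_zero h0
    choose c hc using hex
    refine ⟨c, ?_⟩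
    ext i j
    rw [incidence_apply]
    split_ifs with h
    · rw [← h, hc]
    · have hs := Finset.add_sum_erase Finset.univ (X i) (Finset.mem_univ (c i))
      rw [hrow i, hc i] at hs
      have hz : ∑ k ∈ Finset.univ.erase (c i), X i k = 0 := by linarith
      refine (Finset.sum_eq_zero_iff_of_nonneg ?_).1 hz j (by simp [Ne.symm h])
      intro k _
      rcases h01 i k with h | h <;> simp [h]
  · rintro ⟨hqn, c, rfl⟩
    refine ⟨hqn, fun i j => ?_, ?_, ?_⟩
    · rw [incidence_apply]
      split_ifs <;> simp
    · rw [incidence_mulVec]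
      rfl
    · ext j k
      rw [Matrix.mul_apply, Matrix.diagonal_apply]
      split_ifs with h
      · subst h
        refine Finset.sum_congr rfl fun i _ => ?_
        rw [Matrix.transpose_apply, incidence_apply]
        split_ifs <;> simp
      · refine Finset.sum_eq_zero fun i _ => ?_
        rw [Matrix.transpose_apply, incidence_apply, incidence_apply]
        by_cases hj : c i = j
        · rw [if_neg (fun hk => h (hj.symm.trans hk)), mul_zero]
        · rw [if_neg hj, zero_mul]

lemma isPermMatrix_iff {q : ℕ} (P : Matrix (Fin q) (Fin q) ℝ) :
    IsPermMatrix P ↔ ∃ σ : Equiv.Perm (Fin q), P = incidence σ := by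
  constructor
  · rintro ⟨h01, hr, hcol⟩
    choose σ hσ hσu using hr
    have hinj : Function.Injective σ := fun a b hab =>
      (hcol (σ a)).unique (hσ a) (by simpa [hab] using hσ b)
    refine ⟨Equiv.ofBijective σ (Finite.injective_iff_bijective.1 hinj), ?_⟩
    ext i j
    rw [incidence_apply, Equiv.ofBijective_apply]
    split_ifs with h
    · rw [← h]
      exact hσ i
    · exact (h01 i j).resolve_right fun h1 => h (hσu i j h1).symm
  · rintro ⟨σ, rfl⟩
    refine ⟨fun i j => ?_, fun i => ⟨σ i, ?_, ?_⟩, fun j => ⟨σ.symm j, ?_, ?_⟩⟩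
    · rw [incidence_apply]
      split_ifs <;> simp
    · simp [incidence_apply]
    · intro j hj
      simpa [incidence_apply, eq_comm] using hj
    · simp [incidence_apply]
    · intro i hi
      rw [Equiv.eq_symm_apply]
      simpa [incidence_apply] using hi

/-- A label missed by `c` would give a zero column, contradicting full column rank. -/
lemma surjective_of_rank {n q : ℕ} (c : Fin n → Fin q) (h : (incidence c).rank = q) :
    Function.Surjective c := by
  have hinj : Function.Injective (incidence c).mulVecLin := by
    rw [← LinearMap.ker_eq_bot, ← Submodule.finrank_eq_zero (R := ℝ)]
    have h1 := (incidence c).mulVecLin.finrank_range_add_finrank_ker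
    rw [Module.finrank_fin_fun] at h1
    have h2 : Module.finrank ℝ (LinearMap.range (incidence c).mulVecLin) = q := h
    omega
  intro k
  by_contra! hk
  have h0 : (Pi.single k 1 : Fin q → ℝ) = 0 := by
    apply hinj
    simp only [Matrix.mulVecLin_apply, incidence_mulVec]
    funext i
    simp [hk i]
  simpa using congrFun h0 k

/-- Nested column spaces force the finer labelling `c` to determine the coarser labelling `d`. -/
lemma eq_of_range_le {n q : ℕ} {c d : Fin n → Fin q}
    (h : LinearMap.range (incidence d).mulVecLin ≤ LinearMap.range (incidence c).mulVecLin)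
    {i i' : Fin n} (hc : c i = c i') : d i = d i' := by
  -- The indicator of the label `d i'` is of the form `v ∘ c`.
  obtain ⟨v, hv⟩ := h ⟨Pi.single (d i') 1, rfl⟩
  simp only [Matrix.mulVecLin_apply, incidence_mulVec] at hv
  have h1 := congrFun hv i
  have h2 := congrFun hv i'
  simp only [Function.comp_apply, Pi.single_eq_same] at h1 h2
  rw [hc, h2] at h1
  by_contra hne
  rw [Pi.single_eq_of_ne hne] at h1
  exact one_ne_zero h1

lemma range_incidence_perm_comp {n q : ℕ} (c : Fin n → Fin q) (σ : Equiv.Perm (Fin q)) :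
    LinearMap.range (incidence (σ ∘ c)).mulVecLin = LinearMap.range (incidence c).mulVecLin := by
  ext w
  simp only [LinearMap.mem_range, Matrix.mulVecLin_apply, incidence_mulVec]
  constructor
  · rintro ⟨v, rfl⟩
    exact ⟨v ∘ σ, rfl⟩
  · rintro ⟨v, rfl⟩
    exact ⟨v ∘ σ.symm, by funext i; simp⟩

/-- If `X ∈ ℝ^{n×q}` has rank `q` and its column space `B` contains an assignment-matrix
basis `Z ∈ A_{n,q}` (i.e. `R(Z) = B`), then `B` has exactly `q!` assignment-matrix bases,
namely the matrices `ZP` for permutation matrices `P`. -/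
theorem assignment_bases_of_column_space {n q : ℕ}
    (X : Matrix (Fin n) (Fin q) ℝ) (hrank : X.rank = q)
    (Z : Matrix (Fin n) (Fin q) ℝ) (hZ : IsAssignment Z)
    (hB : LinearMap.range Z.mulVecLin = LinearMap.range X.mulVecLin) :
    {Y : Matrix (Fin n) (Fin q) ℝ |
        IsAssignment Y ∧ LinearMap.range Y.mulVecLin = LinearMap.range X.mulVecLin} =
      {Y : Matrix (Fin n) (Fin q) ℝ | ∃ P, IsPermMatrix P ∧ Y = Z * P} ∧
    {Y : Matrix (Fin n) (Fin q) ℝ |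
        IsAssignment Y ∧
          LinearMap.range Y.mulVecLin = LinearMap.range X.mulVecLin}.ncard =
      Nat.factorial q := by
  obtain ⟨hqn, c, rfl⟩ := (isAssignment_iff Z).1 hZ
  have hsurj : ∀ d : Fin n → Fin q,
      LinearMap.range (incidence d).mulVecLin = LinearMap.range X.mulVecLin →
        Function.Surjective d := by
    intro d hd
    apply surjective_of_rank
    rw [Matrix.rank, hd]
    exact hrank
  have hc := hsurj c hB
  have hset : {Y : Matrix (Fin n) (Fin q) ℝ |
        IsAssignment Y ∧ LinearMap.range Y.mulVecLin = LinearMap.range X.mulVecLin} =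
      Set.range fun σ : Equiv.Perm (Fin q) => incidence (σ ∘ c) := by
    ext Y
    constructor
    · rintro ⟨hY, hYB⟩
      obtain ⟨-, d, rfl⟩ := (isAssignment_iff Y).1 hY
      have hfac : ∀ i, d (Function.surjInv hc (c i)) = d i := fun i =>
        eq_of_range_le (hYB.trans hB.symm).le (Function.surjInv_eq hc (c i))
      have hσ : Function.Surjective fun k => d (Function.surjInv hc k) := by
        intro j
        obtain ⟨i, rfl⟩ := hsurj d hYB j
        exact ⟨c i, hfac i⟩
      refine ⟨Equiv.ofBijective _ (Finite.surjective_iff_bijective.1 hσ), ?_⟩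
      exact congrArg incidence (funext hfac)
    · rintro ⟨σ, rfl⟩
      exact ⟨(isAssignment_iff _).2 ⟨hqn, _, rfl⟩, (range_incidence_perm_comp c σ).trans hB⟩
  rw [hset]
  constructor
  · ext Y
    constructor
    · rintro ⟨σ, rfl⟩
      exact ⟨incidence σ, (isPermMatrix_iff _).2 ⟨σ, rfl⟩, (incidence_mul c σ).symm⟩
    · rintro ⟨P, hP, rfl⟩
      obtain ⟨σ, rfl⟩ := (isPermMatrix_iff P).1 hP
      exact ⟨σ, (incidence_mul c σ).symm⟩
  · have hinj : Function.Injective fun σ : Equiv.Perm (Fin q) => incidence (σ ∘ c) := by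
      intro σ τ h
      exact DFunLike.coe_injective (hc.injective_comp_right (incidence_injective h))
    rw [← Set.image_univ, Set.ncard_image_of_injective _ hinj, Set.ncard_univ,
      Nat.card_eq_fintype_card, Fintype.card_perm, Fintype.card_fin]
end

section
/- Let Z ∈ A_{n,q} be an assignment matrix with column sums n_1, …, n_q, and let Z̄ be the matrix obtained from Z by normalizing each column to unit Euclidean length (so column i of Z̄ has n_i entries equal to 1/√n_i and the rest zero). Then Z̄ ∈ St(q, n), R(Z̄) = R(Z), and Z̄ has exactly n nonzero entries, which is the minimum possible number of nonzero entries among all matrices in St(q, n) whose column space equals R(Z); in particular, the matrices Z̄ P_q (P_q a q×q permutation matrix) are global minimizers of the entrywise ℓ₁ norm ‖X‖_1 = Σ_{ij} |X_{ij}| over {X ∈ St(q, n) : R(X) = R(Z)}. -/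
/-!
Every `X ∈ St(q, n)` with `R(X) = R(Z̄)` is of the form `X = Z̄ Q` with `Q` orthogonal
(`eq_mul_orthogonal`). If row `i` of `Z` has its single one in column `σ i`, then row `i` of
`Z̄ Q` is row `σ i` of `Q` multiplied by `1 / √n_{σ i}`. A row of an orthogonal matrix is a unit
vector, so it is nonzero and its ℓ₁ norm is at least its squared ℓ₂ norm, which is `1`
(`one_le_sum_abs_row`). Hence every row of `X` has a nonzero entry, and its ℓ₁ norm is at least
`1 / √n_{σ i}`, which is the ℓ₁ norm of row `i` of `Z̄ P` for every permutation matrix `P`.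
-/

open Matrix BigOperators

/-- The position of the single `1` in each row of an assignment matrix. -/
lemma IsAssignment.exists_row_index {n q : ℕ} {Z : Matrix (Fin n) (Fin q) ℝ}
    (hZ : IsAssignment Z) :
    ∃ σ : Fin n → Fin q, ∀ i j, Z i j = if j = σ i then 1 else 0 := by
  obtain ⟨-, h01, hrow, -⟩ := hZ
  have hsum : ∀ i, ∑ j, Z i j = 1 := fun i => by
    simpa [mulVec, dotProduct] using congrFun hrow i
  have hex : ∀ i, ∃ k, Z i k = 1 := by
    intro i
    by_contra! hne
    have hzero : ∑ j, Z i j = 0 :=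
      Finset.sum_eq_zero fun j _ => (h01 i j).resolve_right (hne j)
    linarith [hsum i]
  choose σ hσ using hex
  refine ⟨σ, fun i j => ?_⟩
  split_ifs with h
  · rw [h, hσ]
  · refine (h01 i j).resolve_right fun h1 => ?_
    have hle : ∑ k ∈ {j, σ i}, Z i k ≤ ∑ k, Z i k :=
      Finset.sum_le_sum_of_subset_of_nonneg (Finset.subset_univ _) fun k _ _ => by
        rcases h01 i k with h0 | h0 <;> simp [h0]
    rw [Finset.sum_pair h, h1, hσ, hsum] at hle
    norm_num at hle

lemma range_mulVecLin_mul_le {n q r : ℕ} (A : Matrix (Fin n) (Fin q) ℝ)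
    (B : Matrix (Fin q) (Fin r) ℝ) :
    LinearMap.range (A * B).mulVecLin ≤ LinearMap.range A.mulVecLin := by
  rw [Matrix.mulVecLin_mul]
  exact LinearMap.range_comp_le_range _ _

lemma range_mulVecLin_mul_eq {n q : ℕ} (A : Matrix (Fin n) (Fin q) ℝ)
    {B C : Matrix (Fin q) (Fin q) ℝ} (hBC : B * C = 1) :
    LinearMap.range (A * B).mulVecLin = LinearMap.range A.mulVecLin := by
  refine le_antisymm (range_mulVecLin_mul_le A B) ?_
  have h := range_mulVecLin_mul_le (A * B) C
  rwa [Matrix.mul_assoc, hBC, Matrix.mul_one] at h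

/-- Two matrices with orthonormal columns and the same column space differ by an orthogonal
factor on the right. -/
lemma eq_mul_orthogonal {n q : ℕ} {A X : Matrix (Fin n) (Fin q) ℝ} (hA : Aᵀ * A = 1)
    (hX : Xᵀ * X = 1) (hr : LinearMap.range X.mulVecLin = LinearMap.range A.mulVecLin) :
    ∃ Q : Matrix (Fin q) (Fin q) ℝ, X = A * Q ∧ Q * Qᵀ = 1 := by
  have hcol : ∀ j, ∃ w, A *ᵥ w = X.col j := fun j => by
    have hmem : X.col j ∈ LinearMap.range X.mulVecLin :=
      ⟨Pi.single j 1, by simp⟩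
    rw [hr] at hmem
    exact hmem
  choose w hw using hcol
  have hXQ : X = A * (Matrix.of w)ᵀ := by
    ext i j
    simpa [mulVec, dotProduct, Matrix.mul_apply] using (congrFun (hw j) i).symm
  refine ⟨_, hXQ, mul_eq_one_comm.mp ?_⟩
  rw [hXQ, Matrix.transpose_mul, Matrix.mul_assoc, ← Matrix.mul_assoc Aᵀ, hA,
    Matrix.one_mul] at hX
  exact hX

lemma sum_sq_row {q : ℕ} {Q : Matrix (Fin q) (Fin q) ℝ} (hQ : Q * Qᵀ = 1) (k : Fin q) :
    ∑ j, Q k j ^ 2 = 1 := by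
  simpa [Matrix.mul_apply, sq] using congrFun (congrFun hQ k) k

/-- The entries of a unit vector are at most `1` in absolute value, so they dominate their
squares. -/
lemma one_le_sum_abs_row {q : ℕ} {Q : Matrix (Fin q) (Fin q) ℝ} (hQ : Q * Qᵀ = 1)
    (k : Fin q) : 1 ≤ ∑ j, |Q k j| := by
  rw [← sum_sq_row hQ k]
  refine Finset.sum_le_sum fun j _ => ?_
  have hle : Q k j ^ 2 ≤ 1 := by
    rw [← sum_sq_row hQ k]
    exact Finset.single_le_sum (f := fun j => Q k j ^ 2) (fun _ _ => sq_nonneg _)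
      (Finset.mem_univ j)
  have habs : |Q k j| ≤ 1 := (sq_le_one_iff_abs_le_one _).mp hle
  rw [← sq_abs]
  nlinarith [abs_nonneg (Q k j)]

lemma IsPermMatrix.transpose_mul_self {q : ℕ} {P : Matrix (Fin q) (Fin q) ℝ}
    (hP : IsPermMatrix P) : Pᵀ * P = 1 := by
  obtain ⟨h01, hrow, hcol⟩ := hP
  choose ρ hρ hρu using hcol
  have hPρ : ∀ i j, P i j = if i = ρ j then 1 else 0 := fun i j => by
    split_ifs with h
    · rw [h]; exact hρ j
    · exact (h01 i j).resolve_right fun h1 => h (hρu j i h1)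
  have hinj : Function.Injective ρ := fun j k hjk =>
    (hrow (ρ j)).unique (hρ j) (by rw [hjk]; exact hρ k)
  ext j k
  simp [Matrix.mul_apply, hPρ, Matrix.one_apply, hinj.eq_iff, eq_comm]

lemma IsPermMatrix.sum_abs_row {q : ℕ} {P : Matrix (Fin q) (Fin q) ℝ}
    (hP : IsPermMatrix P) (k : Fin q) : ∑ j, |P k j| = 1 := by
  obtain ⟨h01, hrow, -⟩ := hP
  obtain ⟨j, hj, hju⟩ := hrow k
  rw [Finset.sum_eq_single j]
  · simp [hj]
  · intro l _ hl
    simp [(h01 k l).resolve_right fun h1 => hl (hju l h1)]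
  · simp

/-- Normalizing the (nonzero) columns of an assignment matrix `Z` to unit length yields
`Z̄ ∈ St(q,n)` with `R(Z̄) = R(Z)` and exactly `n` nonzero entries, the minimum possible
among matrices in `St(q,n)` with column space `R(Z)`; consequently the matrices `Z̄P`
(`P` a permutation matrix) are global minimizers of the entrywise ℓ₁ norm over
`{X ∈ St(q,n) : R(X) = R(Z)}`. -/
theorem normalized_assignment_minimizes_l1 {n q : ℕ}
    (Z : Matrix (Fin n) (Fin q) ℝ) (hZ : IsAssignment Z)
    (hpos : ∀ j, (∑ i, Z i j) ≠ 0)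
    (Zb : Matrix (Fin n) (Fin q) ℝ)
    (hZb : ∀ i j, Zb i j = Z i j / Real.sqrt (∑ k, Z k j)) :
    Zbᵀ * Zb = 1 ∧
    LinearMap.range Zb.mulVecLin = LinearMap.range Z.mulVecLin ∧
    {p : Fin n × Fin q | Zb p.1 p.2 ≠ 0}.ncard = n ∧
    (∀ X : Matrix (Fin n) (Fin q) ℝ, Xᵀ * X = 1 →
      LinearMap.range X.mulVecLin = LinearMap.range Z.mulVecLin →
      n ≤ {p : Fin n × Fin q | X p.1 p.2 ≠ 0}.ncard) ∧
    (∀ P : Matrix (Fin q) (Fin q) ℝ, IsPermMatrix P →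
      ((Zb * P)ᵀ * (Zb * P) = 1 ∧
        LinearMap.range (Zb * P).mulVecLin = LinearMap.range Z.mulVecLin ∧
        ∀ X : Matrix (Fin n) (Fin q) ℝ, Xᵀ * X = 1 →
          LinearMap.range X.mulVecLin = LinearMap.range Z.mulVecLin →
          (∑ i, ∑ j, |(Zb * P) i j|) ≤ ∑ i, ∑ j, |X i j|)) := by
  obtain ⟨σ, hσ⟩ := hZ.exists_row_index
  have hsumpos : ∀ j, 0 < ∑ i, Z i j := fun j =>
    lt_of_le_of_ne (Finset.sum_nonneg fun i _ => by rw [hσ]; split_ifs <;> norm_num)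
      (hpos j).symm
  set c : Fin q → ℝ := fun j => (Real.sqrt (∑ k, Z k j))⁻¹ with hc
  have hcpos : ∀ j, 0 < c j := fun j => inv_pos.mpr (Real.sqrt_pos.mpr (hsumpos j))
  have hZbdiag : Zb = Z * Matrix.diagonal c := by
    ext i j
    rw [hZb, Matrix.mul_diagonal, div_eq_mul_inv]
  have hcc : Matrix.diagonal c * Matrix.diagonal (fun j => (c j)⁻¹) = 1 := by
    rw [Matrix.diagonal_mul_diagonal, ← Matrix.diagonal_one]
    congr 1
    ext j
    exact mul_inv_cancel₀ (hcpos j).ne'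
  have hSt : Zbᵀ * Zb = 1 := by
    rw [hZbdiag, Matrix.transpose_mul, Matrix.mul_assoc, ← Matrix.mul_assoc Zᵀ, hZ.2.2.2,
      Matrix.diagonal_transpose, Matrix.diagonal_mul_diagonal, Matrix.diagonal_mul_diagonal,
      ← Matrix.diagonal_one]
    congr 1
    ext j
    have hs := Real.mul_self_sqrt (hsumpos j).le
    have hs0 := (Real.sqrt_pos.mpr (hsumpos j)).ne'
    simp only [hc]
    field_simp
    rw [sq, hs]
  have hR : LinearMap.range Zb.mulVecLin = LinearMap.range Z.mulVecLin := by
    rw [hZbdiag]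
    exact range_mulVecLin_mul_eq Z hcc
  have hZbσ : ∀ i j, Zb i j = if j = σ i then c (σ i) else 0 := fun i j => by
    rw [hZbdiag, Matrix.mul_diagonal, hσ]
    split_ifs with h
    · rw [h, one_mul]
    · rw [zero_mul]
  -- Row `i` of `Zb * Q` is a positive multiple of row `σ i` of `Q`.
  have hmul : ∀ (Q : Matrix (Fin q) (Fin q) ℝ) i j, (Zb * Q) i j = c (σ i) * Q (σ i) j :=
    fun Q i j => by simp [Matrix.mul_apply, hZbσ]
  have hrowsum : ∀ (Q : Matrix (Fin q) (Fin q) ℝ) i,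
      ∑ j, |(Zb * Q) i j| = c (σ i) * ∑ j, |Q (σ i) j| := fun Q i => by
    simp_rw [hmul, abs_mul, abs_of_pos (hcpos _), Finset.mul_sum]
  refine ⟨hSt, hR, ?_, ?_, ?_⟩
  · have hset : {p : Fin n × Fin q | Zb p.1 p.2 ≠ 0} = Set.range fun i => (i, σ i) := by
      ext ⟨i, j⟩
      simp [hZbσ, (hcpos _).ne', eq_comm (a := σ i)]
    rw [hset, ← Set.image_univ,
      Set.ncard_image_of_injective _ fun a b hab => congrArg Prod.fst hab, Set.ncard_univ,
      Nat.card_fin]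
  · intro X hX hXR
    obtain ⟨Q, rfl, hQ⟩ := eq_mul_orthogonal hSt hX (hXR.trans hR.symm)
    have hex : ∀ i, ∃ j, (Zb * Q) i j ≠ 0 := by
      intro i
      by_contra! hzero
      have hrow := hrowsum Q i
      simp only [hzero, abs_zero, Finset.sum_const_zero] at hrow
      nlinarith [hcpos (σ i), one_le_sum_abs_row hQ (σ i)]
    choose f hf using hex
    have hsub : Set.range (fun i => (i, f i)) ⊆ {p : Fin n × Fin q | (Zb * Q) p.1 p.2 ≠ 0} := by
      rintro _ ⟨i, rfl⟩
      exact hf i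
    have hcard := Set.ncard_le_ncard hsub (Set.toFinite _)
    rwa [← Set.image_univ,
      Set.ncard_image_of_injective _ fun a b hab => congrArg Prod.fst hab, Set.ncard_univ,
      Nat.card_fin] at hcard
  · intro P hP
    have hPP := hP.transpose_mul_self
    refine ⟨?_, (range_mulVecLin_mul_eq Zb (mul_eq_one_comm.mp hPP)).trans hR, ?_⟩
    · rw [Matrix.transpose_mul, Matrix.mul_assoc, ← Matrix.mul_assoc Zbᵀ, hSt, Matrix.one_mul,
        hPP]
    · intro X hX hXR
      obtain ⟨Q, rfl, hQ⟩ := eq_mul_orthogonal hSt hX (hXR.trans hR.symm)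
      refine Finset.sum_le_sum fun i _ => ?_
      rw [hrowsum, hrowsum, hP.sum_abs_row]
      exact mul_le_mul_of_nonneg_left (one_le_sum_abs_row hQ _) (hcpos _).le
end
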